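/- arXiv:2302.13901 — 2 statements merged into one kernel-verified Lean document; each statement's English description precedes it below -/
import Mathlib

section
/- Let 0 ≤ d < 4/5. Then (1/(1-d)) ∫₀¹∫₀¹∫₀¹ u^{3-3d} v^{1-d} (1-uv)^{-d} (1-vw)^{1-2d} (1-w)^{-d} (1-uvw)^{-d} ₂F₁(1,d;2-d; u(1-vw)/(1-uvw)) dw dv du = [Γ(1-d)Γ(2-d)Γ(4-5d) / ((1-d)² Γ(3-2d) Γ(5-5d))] · ₃F₂(1, d, 2-2d; 2-d, 3-2d; 1) − [Γ(1-d)Γ(3-3d)Γ(4-5d) / (2(1-d)² Γ(4-4d) Γ(5-5d))] · ₄F₃(1, d, 2-2d, 3-3d; 2-d, 3-2d, 4-4d; 1). -/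
open Real MeasureTheory

/-- Pochhammer symbol `(a)_k = a (a+1) ⋯ (a+k-1)` for real `a`. -/
noncomputable def poch (a : ℝ) (k : ℕ) : ℝ := (ascPochhammer ℝ k).eval a

/-- Gaussian hypergeometric function `₂F₁(a,b;c;z)`. -/
noncomputable def hyp2F1 (a b c z : ℝ) : ℝ :=
  ∑' k : ℕ, (poch a k * poch b k) / poch c k * z ^ k / (Nat.factorial k)

/-- Generalized hypergeometric function `₃F₂(a₁,a₂,a₃;b₁,b₂;z)`. -/
noncomputable def hyp3F2 (a₁ a₂ a₃ b₁ b₂ z : ℝ) : ℝ :=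
  ∑' k : ℕ, (poch a₁ k * poch a₂ k * poch a₃ k) / (poch b₁ k * poch b₂ k) * z ^ k /
    (Nat.factorial k)

/-- Generalized hypergeometric function `₄F₃(a₁,a₂,a₃,a₄;b₁,b₂,b₃;z)`. -/
noncomputable def hyp4F3 (a₁ a₂ a₃ a₄ b₁ b₂ b₃ z : ℝ) : ℝ :=
  ∑' k : ℕ, (poch a₁ k * poch a₂ k * poch a₃ k * poch a₄ k) /
    (poch b₁ k * poch b₂ k * poch b₃ k) * z ^ k / (Nat.factorial k)

/-! Replacing the `₂F₁` by Euler's integral and substituting `x = u`, `y = u v`, `z = u v w` turns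
the left-hand side into an integral over `0 < z < y < x < 1`, `z < q < x` of a product of powers of
`1 - y`, `y - z`, `x - q`, `1 - q` and `x - z`. This product is homogeneous under dilations centred
at `1`, so rescaling `1 - x`, `1 - y`, `1 - q` by `1 - z` splits off the `z`-integral and leaves an
integral over `0 < X < Y < 1`, `X < Q < 1`. There the integrand is the product of a function of `Y`
and a function of `X` and `Q`, so the integral over `X < Y` is the unrestricted one minus the one
over `X > Y`. Euler's integral together with beta moments evaluates the former to the `₃F₂` and the
latter to the `₄F₃`. The argument works for independent exponents `α`, `β`, `γ`, `a`, `b`; the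
theorem is the case `α = β = γ = 1 - d`, `a = b = d`. -/

open ProbabilityTheory Set
open scoped ENNReal

section TruncatedPower

/-- The truncated power `x₊ ^ a`, with values in `[0, ∞]`. It vanishes for `x ≤ 0` for every
exponent, so that `posPow x 0` is the indicator function of `x > 0`; this lets the domain of
integration be encoded in the integrand. -/
noncomputable def posPow (x a : ℝ) : ℝ≥0∞ := if 0 < x then ENNReal.ofReal (x ^ a) else 0

lemma posPow_of_pos {x : ℝ} (hx : 0 < x) (a : ℝ) : posPow x a = ENNReal.ofReal (x ^ a) :=
  if_pos hx

lemma posPow_of_nonpos {x : ℝ} (hx : x ≤ 0) (a : ℝ) : posPow x a = 0 := if_neg hx.not_gt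

lemma posPow_zero {x : ℝ} (hx : 0 < x) : posPow x 0 = 1 := by simp [posPow_of_pos hx]

lemma posPow_one {x : ℝ} (hx : 0 < x) : posPow x 1 = ENNReal.ofReal x := by
  simp [posPow_of_pos hx]

lemma posPow_ne_top (x a : ℝ) : posPow x a ≠ ∞ := by
  unfold posPow
  split_ifs <;> simp

lemma toReal_posPow {x : ℝ} (hx : 0 < x) (e : ℝ) : (posPow x e).toReal = x ^ e := by
  rw [posPow_of_pos hx, ENNReal.toReal_ofReal (Real.rpow_nonneg hx.le e)]

@[fun_prop]
lemma measurable_posPow {Ω : Type*} [MeasurableSpace Ω] {f : Ω → ℝ} (hf : Measurable f) (a : ℝ) :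
    Measurable fun ω => posPow (f ω) a :=
  Measurable.ite (measurableSet_lt measurable_const hf) (by fun_prop) measurable_const

lemma posPow_mul_left {c : ℝ} (hc : 0 < c) (x a : ℝ) :
    posPow (c * x) a = posPow c a * posPow x a := by
  rcases lt_or_ge 0 x with hx | hx
  · rw [posPow_of_pos hx, posPow_of_pos hc, posPow_of_pos (mul_pos hc hx),
      Real.mul_rpow hc.le hx.le, ENNReal.ofReal_mul (by positivity)]
  · rw [posPow_of_nonpos hx, posPow_of_nonpos (mul_nonpos_of_nonneg_of_nonpos hc.le hx), mul_zero]

lemma posPow_add (x a b : ℝ) : posPow x (a + b) = posPow x a * posPow x b := by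
  rcases lt_or_ge 0 x with hx | hx
  · simp only [posPow_of_pos hx, Real.rpow_add hx, ENNReal.ofReal_mul (Real.rpow_nonneg hx.le a)]
  · simp only [posPow_of_nonpos hx, mul_zero]

lemma posPow_add_natCast (x a : ℝ) (k : ℕ) :
    posPow x (a + k) = posPow x a * ENNReal.ofReal x ^ k := by
  rcases lt_or_ge 0 x with hx | hx
  · rw [posPow_add, posPow_of_pos hx k, Real.rpow_natCast, ENNReal.ofReal_pow hx.le]
  · simp only [posPow_of_nonpos hx, zero_mul]

lemma posPow_le_posPow_of_nonpos {x y a : ℝ} (hx : 0 < x) (hxy : x ≤ y) (ha : a ≤ 0) :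
    posPow y a ≤ posPow x a := by
  rw [posPow_of_pos hx, posPow_of_pos (hx.trans_le hxy)]
  exact ENNReal.ofReal_le_ofReal (Real.rpow_le_rpow_of_nonpos hx hxy ha)

end TruncatedPower

section LebesgueIntegral

@[fun_prop]
lemma measurable_lintegral_right {Ω Ω' : Type*} [MeasurableSpace Ω] [MeasurableSpace Ω']
    {μ : Measure Ω'} [SFinite μ] {f : Ω → Ω' → ℝ≥0∞} (hf : Measurable fun p : Ω × Ω' => f p.1 p.2) :
    Measurable fun x => ∫⁻ y, f x y ∂μ :=
  Measurable.lintegral_prod_right' hf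

lemma lintegral_comp_affine (f : ℝ → ℝ≥0∞) (b : ℝ) {c : ℝ} (hc : c ≠ 0) :
    ∫⁻ x, f x = ENNReal.ofReal |c| * ∫⁻ t, f (b + c * t) := by
  have hderiv (t : ℝ) : HasDerivAt (fun t => b + c * t) c t := by
    simpa using ((hasDerivAt_id t).const_mul c).const_add b
  have himage : (fun t => b + c * t) '' univ = univ :=
    image_univ_of_surjective fun x => ⟨(x - b) / c, by field_simp; ring⟩
  have hinj : Function.Injective fun t => b + c * t := fun s t h => by simpa [hc] using h
  rw [← setLIntegral_univ f, ← himage, lintegral_image_eq_lintegral_abs_deriv_mul .univ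
    (fun t _ => (hderiv t).hasDerivWithinAt) hinj.injOn, setLIntegral_univ,
    lintegral_const_mul' _ _ ENNReal.ofReal_ne_top]

lemma lintegral_comp_mul_left_of_pos (f : ℝ → ℝ≥0∞) {c : ℝ} (hc : 0 < c) :
    ∫⁻ x, f x = posPow c 1 * ∫⁻ t, f (c * t) := by
  simpa [posPow_one hc, abs_of_pos hc] using lintegral_comp_affine f 0 hc.ne'

lemma lintegral_comp_one_sub_mul (f : ℝ → ℝ≥0∞) {c : ℝ} (hc : 0 < c) :
    ∫⁻ x, f x = posPow c 1 * ∫⁻ t, f (1 - c * t) := by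
  simpa [posPow_one hc, abs_of_pos hc, sub_eq_add_neg] using
    lintegral_comp_affine f 1 (neg_ne_zero.2 hc.ne')

lemma lintegral_triple_comp_one_sub_mul (F : ℝ → ℝ → ℝ → ℝ≥0∞) {c : ℝ} (hc : 0 < c) :
    ∫⁻ x, ∫⁻ y, ∫⁻ z, F x y z
      = posPow c 1 ^ 3 * ∫⁻ x, ∫⁻ y, ∫⁻ z, F (1 - c * x) (1 - c * y) (1 - c * z) := by
  have hz (x y : ℝ) : ∫⁻ z, F x y z = posPow c 1 * ∫⁻ z, F x y (1 - c * z) :=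
    lintegral_comp_one_sub_mul _ hc
  have hy (x : ℝ) : ∫⁻ y, ∫⁻ z, F x y (1 - c * z)
      = posPow c 1 * ∫⁻ y, ∫⁻ z, F x (1 - c * y) (1 - c * z) :=
    lintegral_comp_one_sub_mul _ hc
  simp only [hz, lintegral_const_mul' _ _ (posPow_ne_top c 1), hy]
  rw [lintegral_comp_one_sub_mul _ hc]
  ring

lemma lintegral_eq_setLIntegral_Ioo_mul {f : ℝ → ℝ≥0∞} {c : ℝ} (hc : 0 < c)
    (hf : ∀ x ∉ Ioo 0 c, f x = 0) :
    ∫⁻ x, f x = posPow c 1 * ∫⁻ t in Ioo 0 1, f (c * t) := by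
  rw [lintegral_comp_mul_left_of_pos f hc]
  congr 1
  rw [← lintegral_indicator measurableSet_Ioo, indicator_eq_self.2]
  refine Function.support_subset_iff'.2 fun t ht => hf _ fun hct => ht ⟨?_, ?_⟩
  · exact pos_of_mul_pos_right hct.1 hc.le
  · exact lt_of_mul_lt_mul_left (by simpa using hct.2) hc.le

lemma lintegral_lintegral_lt_add_gt {f g : ℝ → ℝ≥0∞} (hf : Measurable f) (hg : Measurable g) :
    (∫⁻ x, ∫⁻ y, posPow (y - x) 0 * f y * g x) + (∫⁻ x, ∫⁻ y, posPow (x - y) 0 * f y * g x)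
      = (∫⁻ y, f y) * ∫⁻ x, g x := by
  rw [← lintegral_add_left (by fun_prop), ← lintegral_const_mul _ hg]
  refine lintegral_congr fun x => ?_
  rw [← lintegral_add_left (by fun_prop), ← lintegral_mul_const _ hf]
  refine lintegral_congr_ae ?_
  filter_upwards [Measure.ae_ne volume x] with y hy
  rcases lt_or_gt_of_ne hy with h | h
  · simp [posPow_of_nonpos (sub_nonpos.2 h.le), posPow_zero (sub_pos.2 h)]
  · simp [posPow_of_nonpos (sub_nonpos.2 h.le), posPow_zero (sub_pos.2 h)]

lemma integral_integral_integral_toReal {Ω₁ Ω₂ Ω₃ : Type*} [MeasurableSpace Ω₁]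
    [MeasurableSpace Ω₂] [MeasurableSpace Ω₃] {μ₁ : Measure Ω₁} {μ₂ : Measure Ω₂} [SFinite μ₂]
    {μ₃ : Measure Ω₃} [SFinite μ₃] {F : Ω₁ → Ω₂ → Ω₃ → ℝ≥0∞}
    (hF : Measurable fun p : (Ω₁ × Ω₂) × Ω₃ => F p.1.1 p.1.2 p.2)
    (hfin : ∫⁻ u, ∫⁻ v, ∫⁻ w, F u v w ∂μ₃ ∂μ₂ ∂μ₁ ≠ ∞) :
    ∫ u, ∫ v, ∫ w, (F u v w).toReal ∂μ₃ ∂μ₂ ∂μ₁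
      = (∫⁻ u, ∫⁻ v, ∫⁻ w, F u v w ∂μ₃ ∂μ₂ ∂μ₁).toReal := by
  have hmeas₂ : Measurable fun p : Ω₁ × Ω₂ => ∫⁻ w, F p.1 p.2 w ∂μ₃ := hF.lintegral_prod_right'
  have hmeas₁ : Measurable fun u => ∫⁻ v, ∫⁻ w, F u v w ∂μ₃ ∂μ₂ := by fun_prop
  have hfin₁ := ae_lt_top hmeas₁ hfin
  rw [← integral_toReal hmeas₁.aemeasurable hfin₁]
  refine integral_congr_ae ?_
  filter_upwards [hfin₁] with u hu
  have hmeas₂u : Measurable fun v => ∫⁻ w, F u v w ∂μ₃ :=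
    hmeas₂.comp measurable_prodMk_left
  have hfin₂ := ae_lt_top hmeas₂u hu.ne
  rw [← integral_toReal hmeas₂u.aemeasurable hfin₂]
  refine integral_congr_ae ?_
  filter_upwards [hfin₂] with v hv
  have hmeas₃ : Measurable fun w => F u v w := hF.comp (measurable_prodMk_left (x := (u, v)))
  exact integral_toReal hmeas₃.aemeasurable (ae_lt_top hmeas₃ hv.ne)

lemma intervalIntegral_zero_one_eq_setIntegral_Ioo (f : ℝ → ℝ) :
    ∫ u in (0 : ℝ)..1, f u = ∫ u in Ioo 0 1, f u := by
  rw [intervalIntegral.integral_of_le zero_le_one, integral_Ioc_eq_integral_Ioo]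

end LebesgueIntegral

section Beta

lemma poch_pos {a : ℝ} (ha : 0 < a) (k : ℕ) : 0 < poch a k := ascPochhammer_pos k a ha

lemma poch_succ (a : ℝ) (k : ℕ) : poch a (k + 1) = poch a k * (a + k) := by
  simp [poch, ascPochhammer_succ_right]

lemma poch_nonneg {a : ℝ} (ha : 0 ≤ a) (k : ℕ) : 0 ≤ poch a k := by
  induction k with
  | zero => simp [poch]
  | succ k ih => rw [poch_succ]; positivity

lemma poch_div_poch_add_nonneg {s t : ℝ} (hs : 0 < s) (ht : 0 < t) (k : ℕ) :
    0 ≤ poch s k / poch (s + t) k :=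
  (div_pos (poch_pos hs k) (poch_pos (add_pos hs ht) k)).le

lemma Gamma_add_natCast {a : ℝ} (ha : 0 < a) (k : ℕ) :
    Real.Gamma (a + k) = Real.Gamma a * poch a k := by
  induction k with
  | zero => simp [poch]
  | succ k ih =>
    rw [poch_succ, Nat.cast_succ, ← add_assoc, Real.Gamma_add_one (by positivity), ih]
    ring

lemma beta_comm (s t : ℝ) : beta s t = beta t s := by
  rw [beta, beta, mul_comm, add_comm]

lemma beta_one_right {s : ℝ} (hs : 0 < s) : beta s 1 = 1 / s := by
  have := (Real.Gamma_pos_of_pos hs).ne'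
  rw [beta, Real.Gamma_add_one hs.ne', Real.Gamma_one]
  field_simp

lemma beta_one_left {t : ℝ} (ht : 0 < t) : beta 1 t = 1 / t := by
  rw [beta_comm, beta_one_right ht]

lemma beta_add_natCast {s t : ℝ} (hs : 0 < s) (ht : 0 < t) (k : ℕ) :
    beta (s + k) t = beta s t * (poch s k / poch (s + t) k) := by
  rw [beta, beta, add_right_comm, Gamma_add_natCast hs, Gamma_add_natCast (add_pos hs ht)]
  ring

instance sFinite_betaMeasure (s t : ℝ) : SFinite (betaMeasure s t) := by
  unfold betaMeasure
  infer_instance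

lemma ofReal_beta_mul_betaPDF {s t : ℝ} (hs : 0 < s) (ht : 0 < t) (x : ℝ) :
    ENNReal.ofReal (beta s t) * betaPDF s t x = posPow x (s - 1) * posPow (1 - x) (t - 1) := by
  rcases le_or_gt x 0 with hx | hx
  · rw [betaPDF_eq_zero_of_nonpos hx, posPow_of_nonpos hx, mul_zero, zero_mul]
  rcases le_or_gt 1 x with hx' | hx'
  · rw [betaPDF_eq_zero_of_one_le hx', posPow_of_nonpos (sub_nonpos.2 hx'), mul_zero, mul_zero]
  have hβ := beta_pos hs ht
  rw [betaPDF_of_pos_lt_one hx hx', posPow_of_pos hx, posPow_of_pos (sub_pos.2 hx'),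
    ← ENNReal.ofReal_mul hβ.le, ← ENNReal.ofReal_mul (by positivity)]
  congr 1
  field_simp

lemma lintegral_posPow_mul_posPow_one_sub {s t : ℝ} (hs : 0 < s) (ht : 0 < t) (f : ℝ → ℝ≥0∞) :
    ∫⁻ x, posPow x (s - 1) * posPow (1 - x) (t - 1) * f x
      = ENNReal.ofReal (beta s t) * ∫⁻ x, f x ∂betaMeasure s t := by
  have hpdf : Measurable (betaPDF s t) := by unfold betaPDF; fun_prop
  have hfin : ∀ᵐ x, betaPDF s t x < ∞ := .of_forall fun _ => ENNReal.ofReal_lt_top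
  rw [betaMeasure, lintegral_withDensity_eq_lintegral_mul_non_measurable _ hpdf hfin,
    ← lintegral_const_mul' _ _ ENNReal.ofReal_ne_top]
  simp only [Pi.mul_apply, ← mul_assoc, ofReal_beta_mul_betaPDF hs ht]

lemma lintegral_posPow_mul_posPow_one_sub_eq_beta {s t : ℝ} (hs : 0 < s) (ht : 0 < t) :
    ∫⁻ x, posPow x (s - 1) * posPow (1 - x) (t - 1) = ENNReal.ofReal (beta s t) := by
  have := isProbabilityMeasureBeta hs ht
  simpa using lintegral_posPow_mul_posPow_one_sub hs ht fun _ => 1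

lemma ae_betaMeasure_mem_Ioo (s t : ℝ) : ∀ᵐ x ∂betaMeasure s t, x ∈ Ioo (0 : ℝ) 1 := by
  have hpdf : Measurable (betaPDF s t) := by unfold betaPDF; fun_prop
  refine (ae_withDensity_iff hpdf).2 (.of_forall fun x hx => ⟨?_, ?_⟩)
  · exact not_le.1 fun h => hx (betaPDF_eq_zero_of_nonpos h)
  · exact not_le.1 fun h => hx (betaPDF_eq_zero_of_one_le h)

lemma lintegral_pow_betaMeasure {s t : ℝ} (hs : 0 < s) (ht : 0 < t) (k : ℕ) :
    ∫⁻ x, ENNReal.ofReal x ^ k ∂betaMeasure s t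
      = ENNReal.ofReal (poch s k / poch (s + t) k) := by
  have hβ := beta_pos hs ht
  rw [← ENNReal.mul_right_inj (ENNReal.ofReal_pos.2 hβ).ne' ENNReal.ofReal_ne_top,
    ← lintegral_posPow_mul_posPow_one_sub hs ht, ← ENNReal.ofReal_mul hβ.le,
    ← beta_add_natCast hs ht, ← lintegral_posPow_mul_posPow_one_sub_eq_beta (by positivity) ht]
  refine lintegral_congr fun x => ?_
  rw [add_sub_right_comm, posPow_add_natCast]
  ring

lemma lintegral_posPow_one_sub_betaMeasure_ne_top {s t e : ℝ} (hs : 0 < s) (he : 0 ≤ e)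
    (het : e < t) : ∫⁻ x, posPow (1 - x) (-e) ∂betaMeasure s t ≠ ∞ := by
  have ht : 0 < t := he.trans_lt het
  have hβ := ENNReal.ofReal_pos.2 (beta_pos hs ht)
  refine fun h => (ENNReal.ofReal_ne_top (r := beta s (t - e))) ?_
  rw [← lintegral_posPow_mul_posPow_one_sub_eq_beta hs (sub_pos.2 het),
    ← ENNReal.mul_top hβ.ne', ← h, ← lintegral_posPow_mul_posPow_one_sub hs ht]
  refine lintegral_congr fun x => ?_
  rw [mul_assoc, ← posPow_add]
  ring_nf

end Beta

section EulerIntegral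

/-- The power series `∑ cₖ xᵏ` as an element of `[0, ∞]`, for use with nonnegative `cₖ` and `x`
(negative ones are replaced by `0`). -/
noncomputable def powSeries (c : ℕ → ℝ) (x : ℝ) : ℝ≥0∞ :=
  ∑' k, ENNReal.ofReal (c k) * ENNReal.ofReal x ^ k

/- When the series diverges, both sides are `0` by convention. -/
lemma toReal_powSeries {c : ℕ → ℝ} (hc : ∀ k, 0 ≤ c k) {x : ℝ} (hx : 0 ≤ x) :
    (powSeries c x).toReal = ∑' k, c k * x ^ k := by
  rw [powSeries, ENNReal.tsum_toReal_eq fun k => by finiteness]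
  simp [ENNReal.toReal_ofReal, hc, hx]

lemma lintegral_powSeries_betaMeasure {s t z : ℝ} (hs : 0 < s) (ht : 0 < t) (hz : 0 ≤ z)
    (c : ℕ → ℝ) :
    ∫⁻ x, powSeries c (z * x) ∂betaMeasure s t
      = powSeries (fun k => c k * (poch s k / poch (s + t) k)) z := by
  simp only [powSeries, ENNReal.ofReal_mul hz, mul_pow]
  rw [lintegral_tsum fun k => by fun_prop]
  refine tsum_congr fun k => ?_
  simp only [← mul_assoc]
  rw [lintegral_const_mul _ (by fun_prop), lintegral_pow_betaMeasure hs ht,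
    ENNReal.ofReal_mul' (poch_div_poch_add_nonneg hs ht k)]
  ring

lemma hasSum_one_sub_rpow_neg (a : ℝ) {x : ℝ} (hx : |x| < 1) :
    HasSum (fun k : ℕ => poch a k / k.factorial * x ^ k) ((1 - x) ^ (-a)) := by
  have h := (Real.one_div_one_sub_rpow_hasFPowerSeriesOnBall_zero a).hasSum (y := x)
    (by simpa [← ofReal_norm, ENNReal.ofReal_lt_one] using hx)
  have hx' : 0 ≤ 1 - x := sub_nonneg.2 (le_of_abs_le hx.le)
  convert! h using 1
  · ext k
    have hmulti := Ring.factorial_nsmul_multichoose_eq_ascPochhammer a k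
    rw [Polynomial.ascPochhammer_smeval_eq_eval, nsmul_eq_mul] at hmulti
    rw [FormalMultilinearSeries.ofScalars_apply_eq, smul_eq_mul, Ring.choose,
      show a + k - 1 - k + 1 = a by ring, poch, ← hmulti,
      mul_div_cancel_left₀ _ (by positivity)]
  · simp [Real.rpow_neg hx']

lemma posPow_one_sub_eq_powSeries {a x : ℝ} (ha : 0 ≤ a) (hx₀ : 0 ≤ x) (hx₁ : x < 1) :
    posPow (1 - x) (-a) = powSeries (fun k => poch a k / k.factorial) x := by
  have hsum := hasSum_one_sub_rpow_neg a (x := x) (by rwa [abs_of_nonneg hx₀])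
  have hcoeff (k : ℕ) : 0 ≤ poch a k / k.factorial := div_nonneg (poch_nonneg ha k) (by positivity)
  rw [posPow_of_pos (sub_pos.2 hx₁), ← hsum.tsum_eq, ENNReal.ofReal_tsum_of_nonneg
    (fun k => mul_nonneg (hcoeff k) (pow_nonneg hx₀ k)) hsum.summable]
  simp only [ENNReal.ofReal_mul (hcoeff _), ENNReal.ofReal_pow hx₀, powSeries]

/-- The mean of `(1 - z R) ^ (-a)` for a `Beta(s, t)`-distributed `R`, which by Euler's integral is
`₂F₁(s, a; s + t; z)`. -/
noncomputable def eulerMean (a s t z : ℝ) : ℝ≥0∞ :=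
  ∫⁻ r, posPow (1 - z * r) (-a) ∂betaMeasure s t

@[fun_prop]
lemma measurable_eulerMean {Ω : Type*} [MeasurableSpace Ω] (a s t : ℝ) {f : Ω → ℝ}
    (hf : Measurable f) : Measurable fun ω => eulerMean a s t (f ω) := by
  unfold eulerMean
  fun_prop

variable {a s t z : ℝ}

lemma eulerMean_eq_powSeries (ha : 0 ≤ a) (hs : 0 < s) (ht : 0 < t) (hz₀ : 0 ≤ z) (hz₁ : z ≤ 1) :
    eulerMean a s t z
      = powSeries (fun k => poch a k / k.factorial * (poch s k / poch (s + t) k)) z := by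
  rw [← lintegral_powSeries_betaMeasure hs ht hz₀, eulerMean]
  refine lintegral_congr_ae ?_
  filter_upwards [ae_betaMeasure_mem_Ioo s t] with r ⟨hr₀, hr₁⟩
  exact posPow_one_sub_eq_powSeries ha (by positivity)
    (mul_lt_one_of_nonneg_of_lt_one_right hz₁ hr₀.le hr₁)

lemma lintegral_eulerMean_eq_powSeries {s' t' : ℝ} (ha : 0 ≤ a) (hs : 0 < s) (ht : 0 < t)
    (hs' : 0 < s') (ht' : 0 < t') (hz₀ : 0 ≤ z) (hz₁ : z ≤ 1) :
    ∫⁻ x, eulerMean a s t (z * x) ∂betaMeasure s' t'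
      = powSeries (fun k => poch a k / k.factorial * (poch s k / poch (s + t) k) *
          (poch s' k / poch (s' + t') k)) z := by
  rw [← lintegral_powSeries_betaMeasure hs' ht' hz₀]
  refine lintegral_congr_ae ?_
  filter_upwards [ae_betaMeasure_mem_Ioo s' t'] with x ⟨hx₀, hx₁⟩
  exact eulerMean_eq_powSeries ha hs ht (by positivity) (mul_le_one₀ hz₁ hx₀.le hx₁.le)

lemma lintegral_lintegral_eulerMean_eq_powSeries {s' t' s'' t'' : ℝ} (ha : 0 ≤ a) (hs : 0 < s)
    (ht : 0 < t) (hs' : 0 < s') (ht' : 0 < t') (hs'' : 0 < s'') (ht'' : 0 < t'') (hz₀ : 0 ≤ z)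
    (hz₁ : z ≤ 1) :
    ∫⁻ y, ∫⁻ x, eulerMean a s t (z * y * x) ∂betaMeasure s' t' ∂betaMeasure s'' t''
      = powSeries (fun k => poch a k / k.factorial * (poch s k / poch (s + t) k) *
          (poch s' k / poch (s' + t') k) * (poch s'' k / poch (s'' + t'') k)) z := by
  rw [← lintegral_powSeries_betaMeasure hs'' ht'' hz₀]
  refine lintegral_congr_ae ?_
  filter_upwards [ae_betaMeasure_mem_Ioo s'' t''] with y ⟨hy₀, hy₁⟩
  exact lintegral_eulerMean_eq_powSeries ha hs ht hs' ht' (by positivity)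
    (mul_le_one₀ hz₁ hy₀.le hy₁.le)

lemma toReal_eulerMean (ha : 0 ≤ a) (hs : 0 < s) (ht : 0 < t) (hz₀ : 0 ≤ z) (hz₁ : z ≤ 1) :
    (eulerMean a s t z).toReal = hyp2F1 s a (s + t) z := by
  rw [eulerMean_eq_powSeries ha hs ht hz₀ hz₁, toReal_powSeries _ hz₀, hyp2F1]
  · exact tsum_congr fun k => by ring
  · intro k
    have := poch_nonneg ha k
    have := poch_div_poch_add_nonneg hs ht k
    positivity

lemma toReal_lintegral_eulerMean {s' t' : ℝ} (ha : 0 ≤ a) (hs : 0 < s) (ht : 0 < t)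
    (hs' : 0 < s') (ht' : 0 < t') (hz₀ : 0 ≤ z) (hz₁ : z ≤ 1) :
    (∫⁻ x, eulerMean a s t (z * x) ∂betaMeasure s' t').toReal
      = hyp3F2 s a s' (s + t) (s' + t') z := by
  rw [lintegral_eulerMean_eq_powSeries ha hs ht hs' ht' hz₀ hz₁, toReal_powSeries _ hz₀, hyp3F2]
  · exact tsum_congr fun k => by ring
  · intro k
    have := poch_nonneg ha k
    have := poch_div_poch_add_nonneg hs ht k
    have := poch_div_poch_add_nonneg hs' ht' k
    positivity

lemma toReal_lintegral_lintegral_eulerMean {s' t' s'' t'' : ℝ} (ha : 0 ≤ a) (hs : 0 < s)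
    (ht : 0 < t) (hs' : 0 < s') (ht' : 0 < t') (hs'' : 0 < s'') (ht'' : 0 < t'') (hz₀ : 0 ≤ z)
    (hz₁ : z ≤ 1) :
    (∫⁻ y, ∫⁻ x, eulerMean a s t (z * y * x) ∂betaMeasure s' t' ∂betaMeasure s'' t'').toReal
      = hyp4F3 s a s' s'' (s + t) (s' + t') (s'' + t'') z := by
  rw [lintegral_lintegral_eulerMean_eq_powSeries ha hs ht hs' ht' hs'' ht'' hz₀ hz₁,
    toReal_powSeries _ hz₀, hyp4F3]
  · exact tsum_congr fun k => by ring
  · intro k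
    have := poch_nonneg ha k
    have := poch_div_poch_add_nonneg hs ht k
    have := poch_div_poch_add_nonneg hs' ht' k
    have := poch_div_poch_add_nonneg hs'' ht'' k
    positivity

/- For `r, x < 1` both `1 - x` and `1 - r` are at most `1 - x r`, so `(1 - x r) ^ (-a)` is at most
`(1 - x) ^ (-e) (1 - r) ^ (-f)` whenever `a = e + f` with `e, f ≥ 0`. -/
lemma eulerMean_le {e f x : ℝ} (he : 0 ≤ e) (hf : 0 ≤ f) (hx₀ : 0 ≤ x) (hx₁ : x < 1) :
    eulerMean (e + f) s t x
      ≤ posPow (1 - x) (-e) * ∫⁻ r, posPow (1 - r) (-f) ∂betaMeasure s t := by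
  rw [← lintegral_const_mul' _ _ (posPow_ne_top _ _), eulerMean]
  refine lintegral_mono_ae ?_
  filter_upwards [ae_betaMeasure_mem_Ioo s t] with r ⟨hr₀, hr₁⟩
  rw [neg_add, posPow_add]
  gcongr
  · exact posPow_le_posPow_of_nonpos (by linarith) (by nlinarith) (by linarith)
  · exact posPow_le_posPow_of_nonpos (by linarith) (by nlinarith) (by linarith)

lemma lintegral_eulerMean_ne_top {s' t' : ℝ} (ha : 0 ≤ a) (hs : 0 < s) (ht : 0 < t)
    (hs' : 0 < s') (ht' : 0 < t') (hat : a < t + t') :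
    ∫⁻ x, eulerMean a s t x ∂betaMeasure s' t' ≠ ∞ := by
  obtain ⟨e, f, rfl, he₀, hf₀, he, hf⟩ :
      ∃ e f, a = e + f ∧ 0 ≤ e ∧ 0 ≤ f ∧ e < t' ∧ f < t :=
    ⟨a * (t' / (t + t')), a * (t / (t + t')), by field_simp; ring, by positivity, by positivity,
      by field_simp; nlinarith, by field_simp; nlinarith⟩
  have hbound := lintegral_posPow_one_sub_betaMeasure_ne_top hs hf₀ hf
  refine ne_top_of_le_ne_top
    (ENNReal.mul_ne_top (lintegral_posPow_one_sub_betaMeasure_ne_top hs' he₀ he) hbound) ?_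
  rw [← lintegral_mul_const' _ _ hbound]
  refine lintegral_mono_ae ?_
  filter_upwards [ae_betaMeasure_mem_Ioo s' t'] with x ⟨hx₀, hx₁⟩
  exact eulerMean_le he₀ hf₀ hx₀.le hx₁

lemma lintegral_posPow_mul_posPow_sub_mul_posPow_sub {R Q : ℝ} (hs : 0 < s) (ht : 0 < t)
    (hR : 0 < R) (hQ : 0 < Q) :
    ∫⁻ x, posPow x (s - 1) * posPow (R - x) (-a) * posPow (Q - x) (t - 1)
      = posPow R (-a) * posPow Q (s + t - 1) *
          (ENNReal.ofReal (beta s t) * eulerMean a s t (Q / R)) := by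
  have hscale (r : ℝ) :
      posPow (Q * r) (s - 1) * posPow (R - Q * r) (-a) * posPow (Q - Q * r) (t - 1)
        = posPow R (-a) * posPow Q (s - 1) * posPow Q (t - 1) *
          (posPow r (s - 1) * posPow (1 - r) (t - 1) * posPow (1 - Q / R * r) (-a)) := by
    rw [show R - Q * r = R * (1 - Q / R * r) by field_simp, show Q - Q * r = Q * (1 - r) by ring,
      posPow_mul_left hQ, posPow_mul_left hR, posPow_mul_left hQ]
    ring
  rw [lintegral_comp_mul_left_of_pos _ hQ]
  simp only [hscale]
  rw [lintegral_const_mul _ (by fun_prop), lintegral_posPow_mul_posPow_one_sub hs ht, eulerMean,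
    show s + t - 1 = 1 + (s - 1) + (t - 1) by ring, posPow_add, posPow_add]
  ring

end EulerIntegral

section OrderedIntegral

/-- The integrand, for `0 < z < y < x < 1` and `z < q < x`, of the four-dimensional integral to
which the triple integral unfolds when its `₂F₁` is replaced by Euler's integral over `q`. -/
noncomputable def orderedKernel (α β γ a b x y z q : ℝ) : ℝ≥0∞ :=
  posPow z 0 * posPow (1 - x) 0 * posPow (x - y) 0 * posPow (q - z) 0 *
    (posPow (1 - y) (α - 1) * posPow (y - z) (β - 1) * posPow (x - q) (γ - 1) *
      posPow (1 - q) (-a) * posPow (x - z) (-b))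

/-- What is left of `orderedKernel` in the coordinates `X = (1 - x) / (1 - z)`,
`Y = (1 - y) / (1 - z)`, `Q = (1 - q) / (1 - z)` after the power of `1 - z` is split off. -/
noncomputable def cornerKernel (α β γ a b X Y Q : ℝ) : ℝ≥0∞ :=
  posPow X 0 * posPow (Y - X) 0 * posPow (1 - Q) 0 *
    (posPow Y (α - 1) * posPow (1 - Y) (β - 1) * posPow (Q - X) (γ - 1) *
      posPow Q (-a) * posPow (1 - X) (-b))

/-- The `X`-dependent part of `∫ cornerKernel dQ`; see `lintegral_cornerKernel`. -/
noncomputable def sliceWeight (γ a b X : ℝ) : ℝ≥0∞ :=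
  posPow X 0 * posPow (1 - X) (-b) *
    ∫⁻ Q, posPow Q (-a) * posPow (Q - X) (γ - 1) * posPow (1 - Q) 0

/-- The integrand of the triple integral over the unit cube, with `₂F₁(1, a; 1 + γ; ·)` written as
`eulerMean a 1 γ` and scaled by `1 / γ = beta 1 γ`. -/
noncomputable def cubeIntegrand (α β γ a b u v w : ℝ) : ℝ≥0∞ :=
  posPow u (1 + β + γ - b) * posPow v β * posPow (1 - u * v) (α - 1) *
    posPow (1 - v * w) (γ - b) * posPow (1 - w) (β - 1) * posPow (1 - u * v * w) (-a) *
    (ENNReal.ofReal (beta 1 γ) * eulerMean a 1 γ (u * (1 - v * w) / (1 - u * v * w)))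

@[fun_prop]
lemma measurable_orderedKernel {Ω : Type*} [MeasurableSpace Ω] (α β γ a b : ℝ)
    {f g h k : Ω → ℝ} (hf : Measurable f) (hg : Measurable g) (hh : Measurable h)
    (hk : Measurable k) : Measurable fun ω => orderedKernel α β γ a b (f ω) (g ω) (h ω) (k ω) := by
  unfold orderedKernel
  fun_prop

@[fun_prop]
lemma measurable_sliceWeight (γ a b : ℝ) : Measurable (sliceWeight γ a b) := by
  unfold sliceWeight
  fun_prop

variable {α β γ a b : ℝ}

lemma orderedKernel_eq_zero {x y z : ℝ} (h : ¬(0 < z ∧ z < y ∧ y < x ∧ x < 1)) (q : ℝ) :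
    orderedKernel α β γ a b x y z q = 0 := by
  contrapose! h
  simp only [orderedKernel, mul_ne_zero_iff] at h
  have hpos {r e : ℝ} (hr : posPow r e ≠ 0) : 0 < r := by
    contrapose! hr
    exact posPow_of_nonpos hr e
  exact ⟨hpos h.1.1.1.1, sub_pos.1 (hpos h.2.1.1.1.2), sub_pos.1 (hpos h.1.1.2),
    sub_pos.1 (hpos h.1.1.1.2)⟩

lemma lintegral_simplex_eq_cube {F : ℝ → ℝ → ℝ → ℝ≥0∞}
    (hF : ∀ x y z, ¬(0 < z ∧ z < y ∧ y < x ∧ x < 1) → F x y z = 0) :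
    ∫⁻ x, ∫⁻ y, ∫⁻ z, F x y z
      = ∫⁻ u in Ioo 0 1, ∫⁻ v in Ioo 0 1, ∫⁻ w in Ioo 0 1,
          posPow u 1 * posPow (u * v) 1 * F u (u * v) (u * v * w) := by
  rw [lintegral_eq_setLIntegral_Ioo_mul one_pos, posPow_of_pos one_pos]
  · simp only [Real.one_rpow, ENNReal.ofReal_one, one_mul]
    refine setLIntegral_congr_fun measurableSet_Ioo fun u hu => ?_
    rw [lintegral_eq_setLIntegral_Ioo_mul hu.1, ← lintegral_const_mul' _ _ (posPow_ne_top u 1)]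
    · refine setLIntegral_congr_fun measurableSet_Ioo fun v hv => ?_
      rw [lintegral_eq_setLIntegral_Ioo_mul (mul_pos hu.1 hv.1), ← mul_assoc, lintegral_const_mul']
      · exact ENNReal.mul_ne_top (posPow_ne_top _ _) (posPow_ne_top _ _)
      · exact fun z hz => hF _ _ _ fun h => hz ⟨h.1, h.2.1⟩
    · intro y hy
      simp [hF u y _ fun h => hy ⟨h.1.trans h.2.1, h.2.2.1⟩]
  · intro x hx
    simp [hF x _ _ fun h => hx ⟨h.1.trans (h.2.1.trans h.2.2.1), h.2.2.2⟩]

lemma lintegral_orderedKernel (hγ : 0 < γ) {x y z : ℝ} (hz : 0 < z) (hzy : z < y) (hyx : y < x)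
    (hx : x < 1) :
    ∫⁻ q, orderedKernel α β γ a b x y z q
      = posPow (1 - y) (α - 1) * posPow (y - z) (β - 1) * posPow (x - z) (γ - b) *
          posPow (1 - z) (-a) *
          (ENNReal.ofReal (beta 1 γ) * eulerMean a 1 γ ((x - z) / (1 - z))) := by
  have hkernel (t : ℝ) : orderedKernel α β γ a b x y z (z + t)
      = posPow (1 - y) (α - 1) * posPow (y - z) (β - 1) * posPow (x - z) (-b) *
        (posPow t (1 - 1) * posPow (1 - z - t) (-a) * posPow (x - z - t) (γ - 1)) := by
    simp only [orderedKernel, posPow_zero hz, posPow_zero (sub_pos.2 hyx),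
      posPow_zero (sub_pos.2 hx), sub_self, add_sub_cancel_left, sub_add_eq_sub_sub]
    ring
  rw [← lintegral_add_left_eq_self _ z]
  simp only [hkernel]
  rw [lintegral_const_mul _ (by fun_prop), lintegral_posPow_mul_posPow_sub_mul_posPow_sub one_pos hγ
    (by linarith) (by linarith), add_sub_cancel_left, sub_eq_neg_add γ b, posPow_add]
  ring

lemma lintegral_orderedKernel_eq_cube (hγ : 0 < γ) :
    ∫⁻ x, ∫⁻ y, ∫⁻ z, ∫⁻ q, orderedKernel α β γ a b x y z q
      = ∫⁻ u in Ioo 0 1, ∫⁻ v in Ioo 0 1, ∫⁻ w in Ioo 0 1, cubeIntegrand α β γ a b u v w := by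
  rw [lintegral_simplex_eq_cube fun x y z h => by simp [orderedKernel_eq_zero h]]
  refine setLIntegral_congr_fun measurableSet_Ioo fun u ⟨hu₀, hu₁⟩ =>
    setLIntegral_congr_fun measurableSet_Ioo fun v ⟨hv₀, hv₁⟩ =>
    setLIntegral_congr_fun measurableSet_Ioo fun w ⟨hw₀, hw₁⟩ => ?_
  have huv := mul_pos hu₀ hv₀
  have hv_pow : posPow v β = posPow v 1 * posPow v (β - 1) := by rw [← posPow_add, add_sub_cancel]
  rw [lintegral_orderedKernel hγ (mul_pos huv hw₀) (mul_lt_of_lt_one_right huv hw₁)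
    (mul_lt_of_lt_one_right hu₀ hv₁) hu₁, cubeIntegrand,
    show u * v - u * v * w = u * v * (1 - w) by ring,
    show u - u * v * w = u * (1 - v * w) by ring,
    show 1 + β + γ - b = 1 + 1 + (β - 1) + (γ - b) by ring]
  simp only [posPow_mul_left huv, posPow_mul_left hu₀, posPow_add]
  rw [hv_pow]
  ring

lemma orderedKernel_one_sub_mul {c : ℝ} (hc : 0 < c) (X Y Q : ℝ) :
    orderedKernel α β γ a b (1 - c * X) (1 - c * Y) (1 - c) (1 - c * Q)
      = posPow (1 - c) 0 * posPow c (α + β + γ - a - b - 3) * cornerKernel α β γ a b X Y Q := by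
  have hpow : posPow c (α + β + γ - a - b - 3)
      = posPow c 0 * posPow c (α - 1) * posPow c (β - 1) * posPow c (γ - 1) * posPow c (-a) *
        posPow c (-b) := by
    simp only [← posPow_add]
    ring_nf
  rw [orderedKernel, cornerKernel, hpow, posPow_zero hc,
    show 1 - (1 - c * X) = c * X by ring, show 1 - (1 - c * Y) = c * Y by ring,
    show 1 - (1 - c * Q) = c * Q by ring, show 1 - c * X - (1 - c * Y) = c * (Y - X) by ring,
    show 1 - c * Q - (1 - c) = c * (1 - Q) by ring, show 1 - c * Y - (1 - c) = c * (1 - Y) by ring,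
    show 1 - c * X - (1 - c * Q) = c * (Q - X) by ring,
    show 1 - c * X - (1 - c) = c * (1 - X) by ring]
  simp only [posPow_mul_left hc, posPow_zero hc]
  ring

lemma lintegral_orderedKernel_one_sub (c : ℝ) :
    ∫⁻ x, ∫⁻ y, ∫⁻ q, orderedKernel α β γ a b x y (1 - c) q
      = posPow c (1 + α + β + γ - a - b - 1) * posPow (1 - c) (1 - 1) *
          ∫⁻ X, ∫⁻ Y, ∫⁻ Q, cornerKernel α β γ a b X Y Q := by
  rcases le_or_gt c 0 with hc | hc
  · have hzero (x y : ℝ) : ¬(0 < 1 - c ∧ 1 - c < y ∧ y < x ∧ x < 1) := fun h => by linarith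
    simp [posPow_of_nonpos hc, orderedKernel_eq_zero (hzero _ _)]
  have hpow : posPow c (1 + α + β + γ - a - b - 1)
      = posPow c 1 ^ 3 * posPow c (α + β + γ - a - b - 3) := by
    simp only [pow_three, ← posPow_add]
    ring_nf
  have htop : posPow (1 - c) 0 * posPow c (α + β + γ - a - b - 3) ≠ ∞ :=
    ENNReal.mul_ne_top (posPow_ne_top _ _) (posPow_ne_top _ _)
  rw [lintegral_triple_comp_one_sub_mul _ hc]
  simp only [orderedKernel_one_sub_mul hc, lintegral_const_mul' _ _ htop, hpow, sub_self]
  ring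

lemma lintegral_orderedKernel_eq_corner (hσ : 0 < 1 + α + β + γ - a - b) :
    ∫⁻ x, ∫⁻ y, ∫⁻ z, ∫⁻ q, orderedKernel α β γ a b x y z q
      = ENNReal.ofReal (beta (1 + α + β + γ - a - b) 1) *
          ∫⁻ X, ∫⁻ Y, ∫⁻ Q, cornerKernel α β γ a b X Y Q := by
  have hswap_yz (x : ℝ) : ∫⁻ y, ∫⁻ z, ∫⁻ q, orderedKernel α β γ a b x y z q
      = ∫⁻ z, ∫⁻ y, ∫⁻ q, orderedKernel α β γ a b x y z q :=
    lintegral_lintegral_swap (by fun_prop)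
  simp only [hswap_yz]
  rw [lintegral_lintegral_swap (by fun_prop), ← lintegral_sub_left_eq_self _ (1 : ℝ)]
  simp only [lintegral_orderedKernel_one_sub]
  rw [lintegral_mul_const _ (by fun_prop),
    lintegral_posPow_mul_posPow_one_sub_eq_beta hσ one_pos]

lemma lintegral_cornerKernel (X Y : ℝ) :
    ∫⁻ Q, cornerKernel α β γ a b X Y Q
      = posPow (Y - X) 0 * (posPow Y (α - 1) * posPow (1 - Y) (β - 1)) * sliceWeight γ a b X := by
  rw [sliceWeight, ← mul_assoc, ← lintegral_const_mul _ (by fun_prop)]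
  exact lintegral_congr fun Q => by rw [cornerKernel]; ring

lemma lintegral_cornerKernel_add_sliceWeight_gt (hα : 0 < α) (hβ : 0 < β) :
    (∫⁻ X, ∫⁻ Y, ∫⁻ Q, cornerKernel α β γ a b X Y Q) +
        (∫⁻ X, ∫⁻ Y, posPow (X - Y) 0 * (posPow Y (α - 1) * posPow (1 - Y) (β - 1)) *
          sliceWeight γ a b X)
      = ENNReal.ofReal (beta α β) * ∫⁻ X, sliceWeight γ a b X := by
  simp only [lintegral_cornerKernel]
  rw [lintegral_lintegral_lt_add_gt (by fun_prop) (by fun_prop),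
    lintegral_posPow_mul_posPow_one_sub_eq_beta hα hβ]

lemma lintegral_sliceWeight (hγ : 0 < γ) (haγ : a < 1 + γ) :
    ∫⁻ X, sliceWeight γ a b X
      = ENNReal.ofReal (beta 1 γ) * (ENNReal.ofReal (beta (1 + γ - a) 1) *
          ∫⁻ Q, eulerMean b 1 γ (1 * Q) ∂betaMeasure (1 + γ - a) 1) := by
  have hinner (Q : ℝ) : ∫⁻ X, posPow X 0 * posPow (1 - X) (-b) *
        (posPow Q (-a) * posPow (Q - X) (γ - 1) * posPow (1 - Q) 0)
      = ENNReal.ofReal (beta 1 γ) *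
          (posPow Q (1 + γ - a - 1) * posPow (1 - Q) (1 - 1) * eulerMean b 1 γ (1 * Q)) := by
    rcases le_or_gt Q 0 with hQ | hQ
    · simp [posPow_of_nonpos hQ]
    calc
      _ = ∫⁻ X, posPow Q (-a) * posPow (1 - Q) 0 *
            (posPow X (1 - 1) * posPow (1 - X) (-b) * posPow (Q - X) (γ - 1)) :=
        lintegral_congr fun X => by rw [sub_self]; ring
      _ = _ := by
        rw [lintegral_const_mul _ (by fun_prop),
          lintegral_posPow_mul_posPow_sub_mul_posPow_sub one_pos hγ one_pos hQ,
          show 1 + γ - a - 1 = -a + (1 + γ - 1) by ring, posPow_add Q, posPow_of_pos one_pos]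
        simp only [Real.one_rpow, ENNReal.ofReal_one, div_one, one_mul, sub_self]
        ring
  calc
    _ = ∫⁻ X, ∫⁻ Q, posPow X 0 * posPow (1 - X) (-b) *
          (posPow Q (-a) * posPow (Q - X) (γ - 1) * posPow (1 - Q) 0) :=
      lintegral_congr fun X => (lintegral_const_mul _ (by fun_prop)).symm
    _ = _ := by
      rw [lintegral_lintegral_swap (by fun_prop)]
      simp only [hinner]
      rw [lintegral_const_mul _ (by fun_prop),
        lintegral_posPow_mul_posPow_one_sub (sub_pos.2 haγ) one_pos]

lemma lintegral_sliceWeight_ne_top (hγ : 0 < γ) (hb : 0 ≤ b) (haγ : a < 1 + γ) (hbγ : b < 1 + γ) :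
    ∫⁻ X, sliceWeight γ a b X ≠ ∞ := by
  rw [lintegral_sliceWeight hγ haγ]
  simp only [one_mul]
  exact ENNReal.mul_ne_top ENNReal.ofReal_ne_top (ENNReal.mul_ne_top ENNReal.ofReal_ne_top
    (lintegral_eulerMean_ne_top hb one_pos hγ (sub_pos.2 haγ) one_pos (by linarith)))

lemma sliceWeight_one_sub (hγ : 0 < γ) (t : ℝ) :
    sliceWeight γ a b (1 - t)
      = posPow (1 - t) 0 * posPow t (γ - b) *
          (ENNReal.ofReal (beta 1 γ) * eulerMean a 1 γ t) := by
  rcases le_or_gt t 0 with ht | ht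
  · simp [sliceWeight, posPow_of_nonpos ht]
  have hreflect (r : ℝ) : posPow (1 - r) (-a) * posPow (1 - r - (1 - t)) (γ - 1) *
      posPow (1 - (1 - r)) 0 = posPow r (1 - 1) * posPow (1 - r) (-a) * posPow (t - r) (γ - 1) := by
    rw [show 1 - r - (1 - t) = t - r by ring, sub_sub_cancel, sub_self]
    ring
  rw [sliceWeight, ← lintegral_sub_left_eq_self _ (1 : ℝ)]
  simp only [hreflect]
  rw [lintegral_posPow_mul_posPow_sub_mul_posPow_sub one_pos hγ one_pos ht,
    add_sub_cancel_left, sub_sub_cancel, sub_eq_add_neg γ b, posPow_add, posPow_of_pos one_pos,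
    Real.one_rpow, ENNReal.ofReal_one, div_one]
  ring

lemma lintegral_sliceWeight_gt_one_sub (hγ : 0 < γ) (hbγ : b < 1 + γ) {s : ℝ} (hs₀ : 0 < s)
    (hs₁ : s < 1) :
    ∫⁻ X, posPow (X - (1 - s)) 0 * sliceWeight γ a b X
      = posPow s (1 + γ - b) * (ENNReal.ofReal (beta 1 γ) * (ENNReal.ofReal (beta (1 + γ - b) 1) *
          ∫⁻ p, eulerMean a 1 γ (s * p) ∂betaMeasure (1 + γ - b) 1)) := by
  have hscale (p : ℝ) : posPow (1 - s * p - (1 - s)) 0 * sliceWeight γ a b (1 - s * p)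
      = posPow s (γ - b) * ENNReal.ofReal (beta 1 γ) *
        (posPow p (1 + γ - b - 1) * posPow (1 - p) (1 - 1) * eulerMean a 1 γ (s * p)) := by
    rw [sliceWeight_one_sub hγ, posPow_mul_left hs₀, show 1 - s * p - (1 - s) = s * (1 - p) by ring,
      posPow_mul_left hs₀, posPow_zero hs₀, sub_self, show 1 + γ - b - 1 = γ - b by ring]
    rcases le_or_gt 1 p with hp | hp
    · simp [posPow_of_nonpos (sub_nonpos.2 hp)]
    · rw [posPow_zero (show 0 < 1 - s * p by nlinarith)]
      ring
  rw [lintegral_comp_one_sub_mul _ hs₀]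
  simp only [hscale]
  rw [lintegral_const_mul _ (by fun_prop), add_sub_assoc, posPow_add, ← add_sub_assoc,
    lintegral_posPow_mul_posPow_one_sub (sub_pos.2 hbγ) one_pos]
  ring

lemma lintegral_lintegral_sliceWeight_gt (hα : 0 < α) (hβ : 0 < β) (hγ : 0 < γ) (hbγ : b < 1 + γ) :
    ∫⁻ X, ∫⁻ Y, posPow (X - Y) 0 * (posPow Y (α - 1) * posPow (1 - Y) (β - 1)) *
        sliceWeight γ a b X
      = ENNReal.ofReal (beta 1 γ) * (ENNReal.ofReal (beta (1 + γ - b) 1) *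
          (ENNReal.ofReal (beta (1 + β + γ - b) α) *
            ∫⁻ y, ∫⁻ x, eulerMean a 1 γ (1 * y * x)
              ∂betaMeasure (1 + γ - b) 1 ∂betaMeasure (1 + β + γ - b) α)) := by
  have hinner (s : ℝ) : ∫⁻ X, posPow (X - (1 - s)) 0 *
        (posPow (1 - s) (α - 1) * posPow (1 - (1 - s)) (β - 1)) * sliceWeight γ a b X
      = ENNReal.ofReal (beta 1 γ) * ENNReal.ofReal (beta (1 + γ - b) 1) *
          (posPow s (1 + β + γ - b - 1) * posPow (1 - s) (α - 1) *
            ∫⁻ p, eulerMean a 1 γ (1 * s * p) ∂betaMeasure (1 + γ - b) 1) := by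
    rw [sub_sub_cancel]
    rcases le_or_gt s 0 with hs₀ | hs₀
    · simp [posPow_of_nonpos hs₀]
    rcases le_or_gt 1 s with hs₁ | hs₁
    · simp [posPow_of_nonpos (sub_nonpos.2 hs₁)]
    calc
      _ = posPow (1 - s) (α - 1) * posPow s (β - 1) *
            ∫⁻ X, posPow (X - (1 - s)) 0 * sliceWeight γ a b X := by
        rw [← lintegral_const_mul _ (by fun_prop)]
        exact lintegral_congr fun X => by ring
      _ = _ := by
        rw [lintegral_sliceWeight_gt_one_sub hγ hbγ hs₀ hs₁, one_mul,
          show 1 + β + γ - b - 1 = β - 1 + (1 + γ - b) by ring, posPow_add s]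
        ring
  rw [lintegral_lintegral_swap (by fun_prop), ← lintegral_sub_left_eq_self _ (1 : ℝ)]
  simp only [hinner]
  rw [lintegral_const_mul _ (by fun_prop),
    lintegral_posPow_mul_posPow_one_sub (by linarith) hα, mul_assoc]

end OrderedIntegral

section TripleIntegral

variable {α β γ a b : ℝ}

lemma toReal_cubeIntegrand (hγ : 0 < γ) (ha : 0 ≤ a) {u v w : ℝ} (hu : u ∈ Ioo (0 : ℝ) 1)
    (hv : v ∈ Ioo (0 : ℝ) 1) (hw : w ∈ Ioo (0 : ℝ) 1) :
    (cubeIntegrand α β γ a b u v w).toReal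
      = 1 / γ * (u ^ (1 + β + γ - b) * v ^ β * (1 - u * v) ^ (α - 1) * (1 - v * w) ^ (γ - b) *
          (1 - w) ^ (β - 1) * (1 - u * v * w) ^ (-a) *
          hyp2F1 1 a (1 + γ) (u * (1 - v * w) / (1 - u * v * w))) := by
  obtain ⟨hu₀, hu₁⟩ := hu
  obtain ⟨hv₀, hv₁⟩ := hv
  obtain ⟨_, hw₁⟩ := hw
  have huv : 0 < 1 - u * v := by nlinarith
  have hvw : 0 < 1 - v * w := by nlinarith
  have huvw : 0 < 1 - u * v * w := by nlinarith [mul_pos hu₀ hv₀]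
  rw [cubeIntegrand]
  simp only [ENNReal.toReal_mul, toReal_posPow hu₀, toReal_posPow hv₀, toReal_posPow huv,
    toReal_posPow hvw, toReal_posPow huvw, toReal_posPow (sub_pos.2 hw₁)]
  rw [toReal_eulerMean ha one_pos hγ (by positivity) ((div_le_one huvw).2 (by nlinarith)),
    ENNReal.toReal_ofReal (beta_pos one_pos hγ).le, beta_one_left hγ]
  ring

lemma integral_cube_eq_toReal_lintegral_cubeIntegrand (hγ : 0 < γ) (ha : 0 ≤ a)
    (hfin : ∫⁻ u in Ioo 0 1, ∫⁻ v in Ioo 0 1, ∫⁻ w in Ioo 0 1, cubeIntegrand α β γ a b u v w ≠ ∞) :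
    1 / γ * (∫ u in (0:ℝ)..1, ∫ v in (0:ℝ)..1, ∫ w in (0:ℝ)..1,
        u ^ (1 + β + γ - b) * v ^ β * (1 - u * v) ^ (α - 1) * (1 - v * w) ^ (γ - b) *
          (1 - w) ^ (β - 1) * (1 - u * v * w) ^ (-a) *
          hyp2F1 1 a (1 + γ) (u * (1 - v * w) / (1 - u * v * w)))
      = (∫⁻ u in Ioo 0 1, ∫⁻ v in Ioo 0 1, ∫⁻ w in Ioo 0 1,
          cubeIntegrand α β γ a b u v w).toReal := by
  have hmeas : Measurable fun p : (ℝ × ℝ) × ℝ => cubeIntegrand α β γ a b p.1.1 p.1.2 p.2 := by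
    unfold cubeIntegrand
    fun_prop
  rw [← integral_integral_integral_toReal hmeas hfin]
  simp only [intervalIntegral_zero_one_eq_setIntegral_Ioo, ← integral_const_mul]
  exact setIntegral_congr_fun measurableSet_Ioo fun u hu =>
    setIntegral_congr_fun measurableSet_Ioo fun v hv =>
    setIntegral_congr_fun measurableSet_Ioo fun w hw => (toReal_cubeIntegrand hγ ha hu hv hw).symm

lemma toReal_lintegral_sliceWeight (hγ : 0 < γ) (hb : 0 ≤ b) (haγ : a < 1 + γ) :
    (∫⁻ X, sliceWeight γ a b X).toReal
      = 1 / (γ * (1 + γ - a)) * hyp3F2 1 b (1 + γ - a) (1 + γ) (2 + γ - a) 1 := by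
  have haγ' := sub_pos.2 haγ
  rw [lintegral_sliceWeight hγ haγ, ENNReal.toReal_mul, ENNReal.toReal_mul,
    toReal_lintegral_eulerMean hb one_pos hγ haγ' one_pos zero_le_one le_rfl,
    ENNReal.toReal_ofReal (beta_pos one_pos hγ).le,
    ENNReal.toReal_ofReal (beta_pos haγ' one_pos).le, beta_one_left hγ, beta_one_right haγ',
    show 1 + γ - a + 1 = 2 + γ - a by ring]
  field_simp

lemma toReal_lintegral_lintegral_sliceWeight_gt (hα : 0 < α) (hβ : 0 < β) (hγ : 0 < γ) (ha : 0 ≤ a)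
    (hbγ : b < 1 + γ) :
    (∫⁻ X, ∫⁻ Y, posPow (X - Y) 0 * (posPow Y (α - 1) * posPow (1 - Y) (β - 1)) *
        sliceWeight γ a b X).toReal
      = beta (1 + β + γ - b) α / (γ * (1 + γ - b)) *
          hyp4F3 1 a (1 + γ - b) (1 + β + γ - b) (1 + γ) (2 + γ - b) (1 + α + β + γ - b) 1 := by
  have hbγ' := sub_pos.2 hbγ
  have hbβγ : 0 < 1 + β + γ - b := by linarith
  rw [lintegral_lintegral_sliceWeight_gt hα hβ hγ hbγ, ENNReal.toReal_mul,
    ENNReal.toReal_mul, ENNReal.toReal_mul,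
    toReal_lintegral_lintegral_eulerMean ha one_pos hγ hbγ' one_pos hbβγ hα zero_le_one le_rfl,
    ENNReal.toReal_ofReal (beta_pos one_pos hγ).le,
    ENNReal.toReal_ofReal (beta_pos hbγ' one_pos).le, ENNReal.toReal_ofReal (beta_pos hbβγ hα).le,
    beta_one_left hγ, beta_one_right hbγ', show 1 + γ - b + 1 = 2 + γ - b by ring,
    show 1 + β + γ - b + α = 1 + α + β + γ - b by ring]
  field_simp

theorem triple_integral_J1_general (hα : 0 < α) (hβ : 0 < β) (hγ : 0 < γ) (ha : 0 ≤ a)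
    (hb : 0 ≤ b) (haγ : a < 1 + γ) (hbγ : b < 1 + γ) (hσ : a + b < 1 + α + β + γ) :
    1 / γ * (∫ u in (0:ℝ)..1, ∫ v in (0:ℝ)..1, ∫ w in (0:ℝ)..1,
        u ^ (1 + β + γ - b) * v ^ β * (1 - u * v) ^ (α - 1) * (1 - v * w) ^ (γ - b) *
          (1 - w) ^ (β - 1) * (1 - u * v * w) ^ (-a) *
          hyp2F1 1 a (1 + γ) (u * (1 - v * w) / (1 - u * v * w)))
      = (beta α β / (γ * (1 + γ - a)) *
            hyp3F2 1 b (1 + γ - a) (1 + γ) (2 + γ - a) 1 -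
          beta (1 + β + γ - b) α / (γ * (1 + γ - b)) *
            hyp4F3 1 a (1 + γ - b) (1 + β + γ - b) (1 + γ) (2 + γ - b) (1 + α + β + γ - b) 1) /
        (1 + α + β + γ - a - b) := by
  have hσ' : 0 < 1 + α + β + γ - a - b := by linarith
  have hsum := lintegral_cornerKernel_add_sliceWeight_gt (γ := γ) (a := a) (b := b) hα hβ
  have hsum_ne_top := ENNReal.mul_ne_top (ENNReal.ofReal_ne_top (r := beta α β))
    (lintegral_sliceWeight_ne_top hγ hb haγ hbγ)
  obtain ⟨hcorner, hgt⟩ := ENNReal.add_ne_top.1 (hsum ▸ hsum_ne_top)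
  have hcube := (lintegral_orderedKernel_eq_cube (α := α) (β := β) (a := a) (b := b) hγ).symm.trans
    (lintegral_orderedKernel_eq_corner hσ')
  have hreal := congrArg ENNReal.toReal hsum
  rw [ENNReal.toReal_add hcorner hgt,
    toReal_lintegral_lintegral_sliceWeight_gt hα hβ hγ ha hbγ, ENNReal.toReal_mul,
    ENNReal.toReal_ofReal (beta_pos hα hβ).le,
    toReal_lintegral_sliceWeight hγ hb haγ] at hreal
  rw [integral_cube_eq_toReal_lintegral_cubeIntegrand hγ ha
      (hcube ▸ ENNReal.mul_ne_top ENNReal.ofReal_ne_top hcorner), hcube, ENNReal.toReal_mul,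
    ENNReal.toReal_ofReal (beta_pos hσ' one_pos).le,
    beta_one_right hσ', eq_sub_of_add_eq hreal]
  ring

end TripleIntegral

lemma beta_one_sub_div_eq_Gamma {d : ℝ} (hd : d < 4 / 5) :
    beta (1 - d) (1 - d) / ((1 - d) * (2 - 2 * d)) / (4 - 5 * d)
      = Real.Gamma (1 - d) * Real.Gamma (2 - d) * Real.Gamma (4 - 5 * d) /
          ((1 - d) ^ 2 * Real.Gamma (3 - 2 * d) * Real.Gamma (5 - 5 * d)) := by
  have h₁ : 1 - d ≠ 0 := by linarith
  have h₂ : 2 - 2 * d ≠ 0 := by linarith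
  have h₄ : 4 - 5 * d ≠ 0 := by linarith
  have hΓ₄ := (Real.Gamma_pos_of_pos (show 0 < 4 - 5 * d by linarith)).ne'
  rw [beta, show 1 - d + (1 - d) = 2 - 2 * d by ring, show 2 - d = 1 - d + 1 by ring,
    show 3 - 2 * d = 2 - 2 * d + 1 by ring, show 5 - 5 * d = 4 - 5 * d + 1 by ring,
    Real.Gamma_add_one h₁, Real.Gamma_add_one h₂, Real.Gamma_add_one h₄]
  generalize Real.Gamma (4 - 5 * d) = G₄ at hΓ₄ ⊢
  field_simp

lemma beta_three_sub_div_eq_Gamma {d : ℝ} (hd : d < 4 / 5) :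
    beta (3 - 3 * d) (1 - d) / ((1 - d) * (2 - 2 * d)) / (4 - 5 * d)
      = Real.Gamma (1 - d) * Real.Gamma (3 - 3 * d) * Real.Gamma (4 - 5 * d) /
          (2 * (1 - d) ^ 2 * Real.Gamma (4 - 4 * d) * Real.Gamma (5 - 5 * d)) := by
  have h₁ : 1 - d ≠ 0 := by linarith
  have h₄ : 4 - 5 * d ≠ 0 := by linarith
  have hΓ₄ := (Real.Gamma_pos_of_pos (show 0 < 4 - 5 * d by linarith)).ne'
  rw [beta, show 3 - 3 * d + (1 - d) = 4 - 4 * d by ring, show 2 - 2 * d = 2 * (1 - d) by ring,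
    show 5 - 5 * d = 4 - 5 * d + 1 by ring, Real.Gamma_add_one h₄]
  generalize Real.Gamma (4 - 5 * d) = G₄ at hΓ₄ ⊢
  field_simp

theorem triple_integral_J1 (d : ℝ) (hd0 : 0 ≤ d) (hd1 : d < 4 / 5) :
    1 / (1 - d) *
      (∫ u in (0:ℝ)..1, ∫ v in (0:ℝ)..1, ∫ w in (0:ℝ)..1,
        u ^ (3 - 3 * d) * v ^ (1 - d) * (1 - u * v) ^ (-d) * (1 - v * w) ^ (1 - 2 * d) *
          (1 - w) ^ (-d) * (1 - u * v * w) ^ (-d) *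
          hyp2F1 1 d (2 - d) (u * (1 - v * w) / (1 - u * v * w)))
    = Real.Gamma (1 - d) * Real.Gamma (2 - d) * Real.Gamma (4 - 5 * d) /
        ((1 - d) ^ 2 * Real.Gamma (3 - 2 * d) * Real.Gamma (5 - 5 * d)) *
        hyp3F2 1 d (2 - 2 * d) (2 - d) (3 - 2 * d) 1
      - Real.Gamma (1 - d) * Real.Gamma (3 - 3 * d) * Real.Gamma (4 - 5 * d) /
          (2 * (1 - d) ^ 2 * Real.Gamma (4 - 4 * d) * Real.Gamma (5 - 5 * d)) *
          hyp4F3 1 d (2 - 2 * d) (3 - 3 * d) (2 - d) (3 - 2 * d) (4 - 4 * d) 1 := by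
  have hd : 0 < 1 - d := by linarith
  have key := triple_integral_J1_general hd hd hd hd0 hd0 (by linarith) (by linarith) (by linarith)
  rw [show 1 + (1 - d) + (1 - d) + (1 - d) - d = 4 - 4 * d by ring,
    show 1 + (1 - d) + (1 - d) - d = 3 - 3 * d by ring, show 4 - 4 * d - d = 4 - 5 * d by ring,
    show 1 + (1 - d) - d = 2 - 2 * d by ring, show 2 + (1 - d) - d = 3 - 2 * d by ring,
    show 1 + (1 - d) = 2 - d by ring, show 1 - d - 1 = -d by ring,
    show 1 - d - d = 1 - 2 * d by ring] at key
  rw [key, ← beta_one_sub_div_eq_Gamma hd1, ← beta_three_sub_div_eq_Gamma hd1]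
  ring
end

section
/- Let a, b, c be real numbers with a > 0, b > 0, a ≠ b, and c < 1. Then ₃F₂(a, b, c; a+1, b+1; 1) = [Γ(1-c)/(a-b)] · (a·Γ(b+1)/Γ(b-c+1) − b·Γ(a+1)/Γ(a-c+1)). -/
/-!
Each `(a)ₖ / (a + 1)ₖ` is `a / (a + k)`, so partial fractions turn the `₃F₂` into a difference of
two series `∑ₖ (c)ₖ / (k! (a + k))`. Since `∑ₖ (c)ₖ / k! xᵏ = (1 - x) ^ (-c)`, integrating against
`x ^ (a - 1)` term by term identifies the latter with the Beta integral `B(a, 1 - c)`. The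
interchange needs absolute summability: `(1 - c) / (k + 1) · (c)ₖ / k!` telescopes, being equal to
`(c)ₖ / k! - (c)ₖ₊₁ / (k + 1)!`, and eventually has constant sign.
-/

open Real MeasureTheory

lemma poch_ne_zero {a : ℝ} (ha : ∀ n : ℕ, a + n ≠ 0) (k : ℕ) : poch a k ≠ 0 := by
  rw [poch, Ne, ascPochhammer_eval_eq_zero_iff]
  rintro ⟨n, -, hn⟩
  exact ha n (by linarith)

lemma poch_mul_add_eq_mul_poch_add_one (a : ℝ) (k : ℕ) :
    poch a k * (a + k) = a * poch (a + 1) k := by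
  calc poch a k * (a + k) = (ascPochhammer ℝ (k + 1)).eval a :=
        (ascPochhammer_succ_eval k a).symm
    _ = a * poch (a + 1) k := by
        simp only [poch, ascPochhammer_succ_left, Polynomial.eval_mul, Polynomial.eval_X,
          Polynomial.eval_comp, Polynomial.eval_add, Polynomial.eval_one]

lemma poch_div_poch_add_one {a : ℝ} (ha : ∀ n : ℕ, a + n ≠ 0) (k : ℕ) :
    poch a k / poch (a + 1) k = a / (a + k) := by
  have ha' (n : ℕ) : a + 1 + n ≠ 0 := by
    simpa only [Nat.cast_add_one, add_assoc, add_comm (1 : ℝ)] using ha (n + 1)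
  rw [div_eq_div_iff (poch_ne_zero ha' k) (ha k), poch_mul_add_eq_mul_poch_add_one]

lemma poch_div_factorial (c : ℝ) (k : ℕ) : poch c k / k.factorial = Ring.multichoose c k := by
  have h := Ring.factorial_nsmul_multichoose_eq_ascPochhammer c k
  rw [Polynomial.ascPochhammer_smeval_eq_eval, nsmul_eq_mul] at h
  rw [poch, ← h, mul_div_cancel_left₀ _ (by positivity)]

lemma add_one_mul_multichoose_succ {R : Type*} [CommRing R] [BinomialRing R] (r : R) (k : ℕ) :
    (k + 1) * Ring.multichoose r (k + 1) = (r + k) * Ring.multichoose r k := by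
  refine BinomialRing.toIsAddTorsionFree.nsmul_right_injective k.factorial_ne_zero ?_
  have hk := Ring.factorial_nsmul_multichoose_eq_ascPochhammer r k
  have hk' := Ring.factorial_nsmul_multichoose_eq_ascPochhammer r (k + 1)
  rw [Polynomial.ascPochhammer_smeval_eq_eval, nsmul_eq_mul] at hk hk'
  rw [ascPochhammer_succ_eval, ← hk, Nat.factorial_succ] at hk'
  push_cast at hk'
  simp only [nsmul_eq_mul]
  linear_combination hk'

lemma hasSum_multichoose_mul_pow (c : ℝ) {x : ℝ} (hx : |x| < 1) :
    HasSum (fun k ↦ Ring.multichoose c k * x ^ k) ((1 - x) ^ (-c)) := by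
  have hmem : x ∈ Metric.eball (0 : ℝ) 1 := by
    simpa [Metric.mem_eball, edist_dist] using hx
  have h := (one_div_one_sub_rpow_hasFPowerSeriesOnBall_zero c).hasSum hmem
  simp only [FormalMultilinearSeries.ofScalars_apply_eq, ← Ring.multichoose_eq, zero_add,
    smul_eq_mul] at h
  rwa [rpow_neg (by linarith [(abs_lt.mp hx).2]), ← one_div]

lemma abs_multichoose_div_add_one {c : ℝ} (hc : c ≠ 1) {k : ℕ} (hk : 0 ≤ c + k) :
    |Ring.multichoose c k| / (k + 1) =
      (1 - c)⁻¹ * (|Ring.multichoose c k| - |Ring.multichoose c (k + 1)|) := by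
  have hk' : (0 : ℝ) < k + 1 := by positivity
  have hc' : 1 - c ≠ 0 := sub_ne_zero.mpr hc.symm
  have hrec : (k + 1) * |Ring.multichoose c (k + 1)| = (c + k) * |Ring.multichoose c k| := by
    simpa only [abs_mul, abs_of_pos hk', abs_of_nonneg hk] using
      congrArg abs (add_one_mul_multichoose_succ c k)
  field_simp
  linear_combination hrec

lemma summable_abs_multichoose_div_add_one {c : ℝ} (hc : c < 1) :
    Summable fun k : ℕ ↦ |Ring.multichoose c k| / (k + 1) := by
  obtain ⟨N, hN⟩ := exists_nat_ge (-c)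
  rw [← summable_nat_add_iff N]
  have hterm (k : ℕ) : |Ring.multichoose c (k + N)| / ((k + N : ℕ) + 1) =
      (1 - c)⁻¹ * (|Ring.multichoose c (k + N)| - |Ring.multichoose c (k + 1 + N)|) := by
    have hk : 0 ≤ c + (k + N : ℕ) := by
      push_cast
      linarith [k.cast_nonneg (α := ℝ)]
    rw [abs_multichoose_div_add_one hc.ne hk, add_right_comm]
  refine summable_of_sum_range_le (c := (1 - c)⁻¹ * |Ring.multichoose c N|)
    (fun k ↦ by positivity) fun n ↦ ?_
  calc ∑ k ∈ Finset.range n, |Ring.multichoose c (k + N)| / ((k + N : ℕ) + 1)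
      = (1 - c)⁻¹ * (|Ring.multichoose c (0 + N)| - |Ring.multichoose c (n + N)|) := by
        simp only [hterm, ← Finset.mul_sum,
          Finset.sum_range_sub' fun k ↦ |Ring.multichoose c (k + N)|]
    _ ≤ (1 - c)⁻¹ * |Ring.multichoose c N| := by
        rw [zero_add]
        exact mul_le_mul_of_nonneg_left (sub_le_self _ (abs_nonneg _))
          (inv_nonneg.mpr (sub_nonneg.mpr hc.le))

lemma summable_div_add_of_summable_div_add_one {u : ℕ → ℝ} (hu : ∀ k, 0 ≤ u k)
    (hsum : Summable fun k : ℕ ↦ u k / (k + 1)) {a : ℝ} (ha : 0 < a) :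
    Summable fun k : ℕ ↦ u k / (a + k) := by
  refine .of_nonneg_of_le (fun k ↦ div_nonneg (hu k) (by positivity)) (fun k ↦ ?_)
    (hsum.mul_left (1 + a⁻¹))
  have hdenom : (k + 1 : ℝ) ≤ (1 + a⁻¹) * (a + k) := by
    have : (1 + a⁻¹) * (a + k) = k + 1 + (a + a⁻¹ * k) := by field_simp; ring
    linarith [show 0 ≤ a + a⁻¹ * k by positivity]
  rw [← mul_div_assoc, div_le_div_iff₀ (by positivity) (by positivity)]
  linarith [mul_le_mul_of_nonneg_left hdenom (hu k)]

lemma integrableOn_rpow_Ioo_zero_one {s : ℝ} (hs : 0 < s) :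
    IntegrableOn (fun x : ℝ ↦ x ^ (s - 1)) (Set.Ioo 0 1) :=
  (intervalIntegral.integrableOn_Ioo_rpow_iff zero_lt_one).mpr (by linarith)

lemma integral_rpow_Ioo_zero_one {s : ℝ} (hs : 0 < s) :
    ∫ x in Set.Ioo (0 : ℝ) 1, x ^ (s - 1) = 1 / s := by
  rw [← integral_Ioc_eq_integral_Ioo, ← intervalIntegral.integral_of_le zero_le_one,
    integral_rpow (Or.inl (by linarith)), sub_add_cancel, one_rpow, zero_rpow hs.ne', sub_zero]

lemma hasSum_div_add_integral_rpow_mul_tsum {u : ℕ → ℝ} {a : ℝ} (ha : 0 < a)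
    (hu : Summable fun k : ℕ ↦ |u k| / (a + k)) :
    HasSum (fun k : ℕ ↦ u k / (a + k))
      (∫ x in Set.Ioo (0 : ℝ) 1, x ^ (a - 1) * ∑' k, u k * x ^ k) := by
  have hs (k : ℕ) : 0 < a + k := by positivity
  have hnorm (k : ℕ) :
      ∫ x in Set.Ioo (0 : ℝ) 1, ‖u k * x ^ (a + k - 1)‖ = |u k| / (a + k) := by
    rw [← mul_one_div, ← integral_rpow_Ioo_zero_one (hs k), ← integral_const_mul]
    refine setIntegral_congr_fun measurableSet_Ioo fun x hx ↦ ?_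
    simp only [norm_mul, norm_eq_abs, abs_of_nonneg (rpow_nonneg hx.1.le _)]
  have h := hasSum_integral_of_summable_integral_norm
    (fun k ↦ (integrableOn_rpow_Ioo_zero_one (hs k)).const_mul (u k))
    (by simpa only [hnorm] using hu)
  simp only [integral_const_mul, integral_rpow_Ioo_zero_one (hs _), mul_one_div] at h
  convert! h using 1
  refine setIntegral_congr_fun measurableSet_Ioo fun x hx ↦ ?_
  simp only [← tsum_mul_left]
  refine tsum_congr fun k ↦ ?_
  rw [add_sub_right_comm, rpow_add_natCast hx.1.ne']
  ring

lemma integral_Ioo_rpow_mul_one_sub_rpow {a v : ℝ} (ha : 0 < a) (hv : 0 < v) :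
    ∫ x in Set.Ioo (0 : ℝ) 1, x ^ (a - 1) * (1 - x) ^ (v - 1) = ProbabilityTheory.beta a v := by
  have hcast : ∫ x in Set.Ioo (0 : ℝ) 1, (x : ℂ) ^ ((a : ℂ) - 1) * (1 - (x : ℂ)) ^ ((v : ℂ) - 1) =
      ∫ x in Set.Ioo (0 : ℝ) 1, ((x ^ (a - 1) * (1 - x) ^ (v - 1) : ℝ) : ℂ) := by
    refine setIntegral_congr_fun measurableSet_Ioo fun x hx ↦ ?_
    rw [Complex.ofReal_mul, Complex.ofReal_cpow hx.1.le,
      Complex.ofReal_cpow (sub_nonneg.mpr hx.2.le)]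
    push_cast
    rfl
  rw [ProbabilityTheory.beta_eq_betaIntegralReal a v ha hv, Complex.betaIntegral,
    intervalIntegral.integral_of_le zero_le_one, integral_Ioc_eq_integral_Ioo, hcast,
    integral_complex_ofReal, Complex.ofReal_re]

lemma hasSum_multichoose_div_add {a c : ℝ} (ha : 0 < a) (hc : c < 1) :
    HasSum (fun k : ℕ ↦ Ring.multichoose c k / (a + k)) (ProbabilityTheory.beta a (1 - c)) := by
  have hsum : Summable fun k : ℕ ↦ |Ring.multichoose c k| / (a + k) :=
    summable_div_add_of_summable_div_add_one (fun k ↦ abs_nonneg _)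
      (summable_abs_multichoose_div_add_one hc) ha
  convert hasSum_div_add_integral_rpow_mul_tsum ha hsum using 1
  rw [← integral_Ioo_rpow_mul_one_sub_rpow ha (sub_pos.mpr hc)]
  refine setIntegral_congr_fun measurableSet_Ioo fun x hx ↦ ?_
  have hx' : |x| < 1 := abs_lt.mpr ⟨by linarith [hx.1], hx.2⟩
  simp only [(hasSum_multichoose_mul_pow c hx').tsum_eq, sub_sub_cancel_left]

lemma hyp3F2_contiguous_eq_tsum {a b : ℝ} (ha : ∀ n : ℕ, a + n ≠ 0) (hb : ∀ n : ℕ, b + n ≠ 0)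
    (hab : a ≠ b) (c : ℝ) :
    hyp3F2 a b c (a + 1) (b + 1) 1 = ∑' k : ℕ, a * b / (a - b) *
      (Ring.multichoose c k / (b + k) - Ring.multichoose c k / (a + k)) := by
  have hab' : a - b ≠ 0 := sub_ne_zero.mpr hab
  refine tsum_congr fun k ↦ ?_
  have hak := ha k
  have hbk := hb k
  calc _ = poch a k / poch (a + 1) k * (poch b k / poch (b + 1) k) *
        (poch c k / k.factorial) := by rw [one_pow]; ring
    _ = a / (a + k) * (b / (b + k)) * Ring.multichoose c k := by
        rw [poch_div_poch_add_one ha, poch_div_poch_add_one hb, poch_div_factorial]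
    _ = _ := by field_simp; ring

theorem hyp3F2_contiguous_eval (a b c : ℝ) (ha : 0 < a) (hb : 0 < b) (hab : a ≠ b)
    (hc : c < 1) :
    hyp3F2 a b c (a + 1) (b + 1) 1
    = Real.Gamma (1 - c) / (a - b) *
        (a * Real.Gamma (b + 1) / Real.Gamma (b - c + 1)
          - b * Real.Gamma (a + 1) / Real.Gamma (a - c + 1)) := by
  have ha' (n : ℕ) : a + n ≠ 0 := by positivity
  have hb' (n : ℕ) : b + n ≠ 0 := by positivity
  have hsum := ((hasSum_multichoose_div_add hb hc).sub
    (hasSum_multichoose_div_add ha hc)).mul_left (a * b / (a - b))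
  rw [hyp3F2_contiguous_eq_tsum ha' hb' hab, hsum.tsum_eq, ProbabilityTheory.beta,
    ProbabilityTheory.beta, Gamma_add_one ha.ne', Gamma_add_one hb.ne', sub_add_eq_add_sub,
    sub_add_eq_add_sub, add_sub_assoc, add_sub_assoc]
  ring
end
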